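/- Let (A, m) be a commutative noetherian local ring. Then A is Cohen–Macaulay if and only if sup{ projdim_A(M) : M a nonzero finitely generated A-module with projdim_A(M) < ∞ } equals the Krull dimension of A. -/

import Mathlib

/-!
STATEMENT 13: Let (A, m) be a commutative noetherian local ring.  Then A is
Cohen–Macaulay (depth(A) = dim(A)) if and only if
sup{ projdim_A(M) : M nonzero finitely generated with projdim_A(M) < ∞ } = dim(A).
-/

open CategoryTheory

universe u

/-- `Ext_A^i(M, N)` as an `A`-module. -/
noncomputable abbrev extGroup (A : Type u) [CommRing A] (M N : ModuleCat.{u} A) (i : ℕ) :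
    ModuleCat A :=
  ((Ext A (ModuleCat.{u} A) i).obj (Opposite.op M)).obj N

/-- The projective dimension of an `A`-module `M`, defined as the least `n : ℕ∞` such that
`Ext_A^i(M, N) = 0` for every `A`-module `N` and every `i > n` (and `∞` if no such `n` exists). -/
noncomputable def projDim (A : Type u) [CommRing A] (M : ModuleCat.{u} A) : ℕ∞ :=
  sInf {n : ℕ∞ | ∀ (N : ModuleCat.{u} A) (i : ℕ), n < (i : ℕ∞) →
    Subsingleton (extGroup A M N i)}

/-- The depth of a commutative local ring `A`: the least `i : ℕ` such that
`Ext_A^i(k, A) ≠ 0`, where `k` is the residue field of `A` (`∞` if no such `i` exists). -/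
noncomputable def ringDepth (A : Type u) [CommRing A] [IsLocalRing A] : ℕ∞ :=
  sInf {n : ℕ∞ | ∃ i : ℕ, (i : ℕ∞) = n ∧
    ¬ Subsingleton
      (extGroup A (ModuleCat.of A (IsLocalRing.ResidueField A)) (ModuleCat.of A A) i)}

theorem subsingleton_ext_iff (A : Type u) [CommRing A] (M N : ModuleCat.{u} A) (i : ℕ) :
    Subsingleton (extGroup A M N i) ↔ Subsingleton (Abelian.Ext.{u} M N i) := by
  let P := projectiveResolution M
  have h1 : Subsingleton (extGroup A M N i) ↔ (P.complex.linearYonedaObj A N).ExactAt i := by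
    rw [HomologicalComplex.exactAt_iff_isZero_homology, ← (P.isoExt (R := A) i N).isZero_iff,
      ModuleCat.isZero_iff_subsingleton]
  rw [h1]
  rcases i with _ | p
  · rw [HomologicalComplex.exactAt_iff' _ 0 0 1 (by simp) (by simp),
      ShortComplex.moduleCat_exact_iff, Abelian.Ext.homEquiv₀.subsingleton_congr]
    have hcomp : P.complex.d 1 0 ≫ P.π.f 0 = 0 := P.complex_d_comp_π_f_zero
    constructor
    · intro h
      refine subsingleton_of_forall_eq 0 fun f => ?_
      obtain ⟨y, hy⟩ := h (P.π.f 0 ≫ f) (by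
        change P.complex.d 1 0 ≫ P.π.f 0 ≫ f = 0
        exact (Category.assoc _ _ _).symm.trans
          ((congrArg (· ≫ f) hcomp).trans Limits.zero_comp))
      have h0 : (P.π.f 0 ≫ f : P.complex.X 0 ⟶ N) = 0 := by
        rw [← hy]
        change P.complex.d 0 0 ≫ (show P.complex.X 0 ⟶ N from y) = 0
        rw [P.complex.shape _ _ (by simp), Limits.zero_comp]
      exact (cancel_epi (P.π.f 0)).mp (h0.trans Limits.comp_zero.symm)
    · intro h x hx
      refine ⟨0, ?_⟩
      obtain ⟨l, hl⟩ := Limits.CokernelCofork.IsColimit.desc' P.isColimitCokernelCofork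
        (show P.complex.X 0 ⟶ N from x) hx
      have h2 : l = 0 := h.elim (show M ⟶ N from l) 0
      rw [map_zero]
      refine Eq.trans ?_ hl
      rw [h2]
      exact Limits.comp_zero.symm
  · rw [HomologicalComplex.exactAt_iff' _ p (p+1) (p+2) (by simp) (by simp),
      ShortComplex.moduleCat_exact_iff]
    constructor
    · intro h
      refine subsingleton_of_forall_eq 0 fun α => ?_
      obtain ⟨f, hf, rfl⟩ := P.extMk_surjective α (p+2) rfl
      rw [P.extMk_eq_zero_iff f _ rfl hf p rfl]
      exact h f hf
    · intro h x hx
      exact (P.extMk_eq_zero_iff x (p+2) rfl hx p rfl).mp (Subsingleton.elim _ _)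

open IsLocalRing TensorProduct in
theorem exists_minimal_presentation (A : Type u) [CommRing A] [IsNoetherianRing A] [IsLocalRing A]
    (M : Type u) [AddCommGroup M] [Module A M] [Module.Finite A M] :
    ∃ (n : ℕ) (f : (Fin n → A) →ₗ[A] M), Function.Surjective f ∧
      ∀ x, f x = 0 → ∀ i, x i ∈ maximalIdeal A := by
  let b := Module.finBasis (ResidueField A) (ResidueField A ⊗[A] M)
  have hsurj : Function.Surjective (TensorProduct.mk A (ResidueField A) M 1) :=
    TensorProduct.mk_surjective A M (ResidueField A) residue_surjective
  choose v hv using fun i => hsurj (b i)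
  refine ⟨_, Fintype.linearCombination A v, ?_, ?_⟩
  · rw [← LinearMap.range_eq_top, Fintype.range_linearCombination]
    exact span_eq_top_of_tmul_eq_basis v b hv
  · intro x hx i
    have h := congrArg (TensorProduct.mk A (ResidueField A) M 1) hx
    simp only [Fintype.linearCombination_apply, map_sum, map_smul, hv, map_zero] at h
    have h2 : ∑ i, residue A (x i) • b i = 0 := by
      rw [← h]
      refine Finset.sum_congr rfl fun j _ => ?_
      exact (algebraMap_smul (ResidueField A) (x j) (b j))
    have := Fintype.linearIndependent_iff.mp b.linearIndependent _ h2 i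
    exact (residue_eq_zero_iff _).mp this

open IsLocalRing in
/-- a map between finite free modules with entries in `m` induces zero on `Ext(k, -)`. -/
theorem ext_comp_eq_zero (A : Type u) [CommRing A] [IsLocalRing A]
    (N : ModuleCat.{u} A) (n : ℕ) (f : N ⟶ ModuleCat.of A (Fin n → A))
    (hN : Module.Free A N) (hN' : Module.Finite A N)
    (hf : ∀ x i, f.hom x i ∈ maximalIdeal A) (d : ℕ)
    (α : Abelian.Ext.{u} (ModuleCat.of A (ResidueField A)) N d) :
    α.comp (Abelian.Ext.mk₀ f) (add_zero d) = 0 := by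
  let b := Module.Free.chooseBasis A N
  let g (j) (i : Fin n) : N ⟶ ModuleCat.of A (Fin n → A) :=
    ModuleCat.ofHom ((LinearMap.single A (fun _ => A) i) ∘ₗ b.coord j)
  have hsum : f = ∑ j, ∑ i, (f.hom (b j) i) • g j i := by
    apply ModuleCat.hom_ext
    refine b.ext fun j => ?_
    ext i
    simp [ModuleCat.hom_sum, g, Finsupp.single_apply, Pi.single_apply]
  have hz (r : A) (hr : r ∈ maximalIdeal A) (g : N ⟶ ModuleCat.of A (Fin n → A)) :
      α.comp (Abelian.Ext.mk₀ (r • g)) (add_zero d) = 0 := by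
    have h0 : r • 𝟙 (ModuleCat.of A (ResidueField A)) = 0 := by
      apply ModuleCat.hom_ext
      ext
      simpa [Algebra.smul_def] using Or.inl ((residue_eq_zero_iff r).mpr hr)
    have h1 : r • α = 0 := by
      rw [← Abelian.Ext.mk₀_id_comp α, ← Abelian.Ext.smul_comp, ← Abelian.Ext.mk₀_smul, h0]
      simp
    rw [Abelian.Ext.mk₀_smul, Abelian.Ext.comp_smul, ← Abelian.Ext.smul_comp, h1]
    simp
  rw [hsum]
  simp only [← Abelian.Ext.addEquiv₀_symm_apply, map_sum, Abelian.Ext.comp_sum]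
  refine Finset.sum_eq_zero fun j _ => Finset.sum_eq_zero fun i _ => ?_
  exact hz _ (hf _ _) _

open IsLocalRing in
/-- A step of the induction: if `0 → N → F → M → 0` is exact, and `Ext^e(k, N) → Ext^e(k, F)` is
zero with nonzero source, then `e > 0` and `Ext^(e-1)(k, M) ≠ 0`. -/
theorem ext_step {A : Type u} [CommRing A] (K : ModuleCat.{u} A)
    (S : ShortComplex (ModuleCat.{u} A)) (hS : S.ShortExact) (e : ℕ)
    (hne : ¬ Subsingleton (Abelian.Ext.{u} K S.X₁ e))
    (h0 : ∀ α : Abelian.Ext.{u} K S.X₁ e, α.comp (Abelian.Ext.mk₀ S.f) (add_zero e) = 0) :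
    ∃ e', e' + 1 = e ∧ ¬ Subsingleton (Abelian.Ext.{u} K S.X₃ e') := by
  rcases e with _ | e
  · exfalso
    apply hne
    refine subsingleton_of_forall_eq 0 fun α => ?_
    obtain ⟨f, rfl⟩ := (Abelian.Ext.mk₀_bijective K S.X₁).2 α
    have h := h0 (Abelian.Ext.mk₀ f)
    rw [Abelian.Ext.mk₀_comp_mk₀, ← Abelian.Ext.mk₀_zero,
      (Abelian.Ext.mk₀_bijective _ _).1.eq_iff] at h
    have := hS.mono_f
    have : f = 0 := (cancel_mono S.f).mp (h.trans Limits.zero_comp.symm)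
    rw [this, Abelian.Ext.mk₀_zero]
  · refine ⟨e, rfl, fun hs => hne ?_⟩
    refine subsingleton_of_forall_eq 0 fun α => ?_
    obtain ⟨β, rfl⟩ := Abelian.Ext.covariant_sequence_exact₁ K hS α (h0 α) rfl
    rw [Subsingleton.elim β 0, Abelian.Ext.zero_comp]

open IsLocalRing in
theorem ext_free_subsingleton {A : Type u} [CommRing A] (K : ModuleCat.{u} A) (n d : ℕ)
    (h : Subsingleton (Abelian.Ext.{u} K (ModuleCat.of A A) d)) :
    Subsingleton (Abelian.Ext.{u} K (ModuleCat.of A (Fin n → A)) d) := by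
  refine subsingleton_of_forall_eq 0 fun α => ?_
  let p (i : Fin n) : ModuleCat.of A (Fin n → A) ⟶ ModuleCat.of A A :=
    ModuleCat.ofHom (LinearMap.proj i)
  let s (i : Fin n) : ModuleCat.of A A ⟶ ModuleCat.of A (Fin n → A) :=
    ModuleCat.ofHom (LinearMap.single A (fun _ => A) i)
  have hsum : 𝟙 (ModuleCat.of A (Fin n → A)) = ∑ i, p i ≫ s i := by
    apply ModuleCat.hom_ext
    refine LinearMap.ext fun x => funext fun j => ?_
    simp [ModuleCat.hom_sum, p, s, Pi.single_apply]
  rw [← Abelian.Ext.comp_mk₀_id α, hsum]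
  simp only [← Abelian.Ext.addEquiv₀_symm_apply, map_sum, Abelian.Ext.comp_sum]
  refine Finset.sum_eq_zero fun i _ => ?_
  rw [Abelian.Ext.addEquiv₀_symm_apply, ← Abelian.Ext.mk₀_comp_mk₀,
    ← Abelian.Ext.comp_assoc_of_third_deg_zero, Subsingleton.elim
    (α.comp (Abelian.Ext.mk₀ (p i)) (add_zero d)) 0, Abelian.Ext.zero_comp]

theorem ext_retract_subsingleton {A : Type u} [CommRing A] (K : ModuleCat.{u} A)
    {X Y : ModuleCat.{u} A} (r : Retract X Y) (d : ℕ)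
    (h : Subsingleton (Abelian.Ext.{u} K Y d)) : Subsingleton (Abelian.Ext.{u} K X d) := by
  refine subsingleton_of_forall_eq 0 fun α => ?_
  rw [← Abelian.Ext.comp_mk₀_id α, ← r.retract, ← Abelian.Ext.mk₀_comp_mk₀,
    ← Abelian.Ext.comp_assoc_of_third_deg_zero, Subsingleton.elim
    (α.comp (Abelian.Ext.mk₀ r.i) (add_zero d)) 0, Abelian.Ext.zero_comp]

open IsLocalRing in
/-- The key part of the Auslander–Buchsbaum formula. -/
theorem auslander_buchsbaum_aux (A : Type u) [CommRing A] [IsNoetherianRing A] [IsLocalRing A]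
    (d : ℕ)
    (hlt : ∀ i < d, Subsingleton
      (Abelian.Ext.{u} (ModuleCat.of A (ResidueField A)) (ModuleCat.of A A) i))
    (hd : ¬ Subsingleton
      (Abelian.Ext.{u} (ModuleCat.of A (ResidueField A)) (ModuleCat.of A A) d))
    (n : ℕ) : ∀ (M : ModuleCat.{u} A) (_ : Module.Finite A M)
      (_ : HasProjectiveDimensionLE M n) (_ : ¬ HasProjectiveDimensionLT M n),
      ∃ e, e + n = d ∧
        ¬ Subsingleton (Abelian.Ext.{u} (ModuleCat.of A (ResidueField A)) M e) := by
  induction n with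
  | zero =>
    intro M _ hle hnlt
    refine ⟨d, rfl, fun hs => hd ?_⟩
    have hp : Projective M := projective_iff_hasProjectiveDimensionLT_one.mpr hle
    have hp' : Module.Projective A M := (IsProjective.iff_projective M).mpr hp
    have hfree : Module.Free A M := Module.free_of_flat_of_isLocalRing
    have hnt : Nontrivial M := by
      by_contra hc
      rw [not_nontrivial_iff_subsingleton] at hc
      exact hnlt (ModuleCat.isZero_iff_subsingleton.mpr hc).hasProjectiveDimensionLT_zero
    let b := Module.Free.chooseBasis A M
    obtain ⟨j⟩ := b.index_nonempty
    refine ext_retract_subsingleton _ (Y := M) ⟨ModuleCat.ofHom (LinearMap.toSpanSingleton A M (b j)),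
      ModuleCat.ofHom (b.coord j), ?_⟩ d hs
    apply ModuleCat.hom_ext
    ext
    simp
  | succ n ih =>
    intro M _ hle hnlt
    obtain ⟨m, f, hf, hmin⟩ := exists_minimal_presentation A M
    let S : ShortComplex (ModuleCat.{u} A) := f.shortComplexKer
    have hS : S.ShortExact := LinearMap.shortExact_shortComplexKer hf
    have hproj : Projective S.X₂ :=
      (IsProjective.iff_projective (R := A) (Fin m → A)).mp inferInstance
    have hN : HasProjectiveDimensionLE S.X₁ n :=
      hS.hasProjectiveDimensionLT_X₁ (n + 1) inferInstance hle
    have hN' : ¬ HasProjectiveDimensionLT S.X₁ n := fun h =>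
      hnlt (hS.hasProjectiveDimensionLT_X₃ n h inferInstance)
    have hfin : Module.Finite A S.X₁ := inferInstanceAs (Module.Finite A (LinearMap.ker f))
    obtain ⟨e, he, hne⟩ := ih S.X₁ hfin hN hN'
    have h0 : ∀ α : Abelian.Ext.{u} (ModuleCat.of A (ResidueField A)) S.X₁ e,
        α.comp (Abelian.Ext.mk₀ S.f) (add_zero e) = 0 := by
      intro α
      rcases n with _ | n
      · have hp : Projective S.X₁ := projective_iff_hasProjectiveDimensionLT_one.mpr hN
        have hp' : Module.Projective A S.X₁ := (IsProjective.iff_projective S.X₁).mpr hp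
        have hfree : Module.Free A S.X₁ := Module.free_of_flat_of_isLocalRing
        exact ext_comp_eq_zero A S.X₁ m S.f hfree hfin (fun x i => hmin _ x.2 i) e α
      · have := ext_free_subsingleton _ m e (hlt e (by omega))
        exact this.elim _ _
    obtain ⟨e', he', hne'⟩ := ext_step _ S hS e hne h0
    exact ⟨e', by omega, hne'⟩

theorem projDim_le_iff {A : Type u} [CommRing A] (M : ModuleCat.{u} A) (n : ℕ) :
    projDim A M ≤ n ↔ HasProjectiveDimensionLE M n := by
  constructor
  · intro h
    have hm : projDim A M ∈ {n : ℕ∞ | ∀ (N : ModuleCat.{u} A) (i : ℕ), n < (i : ℕ∞) →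
      Subsingleton (extGroup A M N i)} := csInf_mem ⟨⊤, fun N i hi => absurd hi not_top_lt⟩
    refine HasProjectiveDimensionLT.mk fun i hi N e => ?_
    have := (subsingleton_ext_iff A M N i).mp
      (hm N i (lt_of_le_of_lt h (by exact_mod_cast hi)))
    exact Subsingleton.elim _ _
  · intro h
    refine sInf_le fun N i hi => ?_
    rw [subsingleton_ext_iff]
    exact HasProjectiveDimensionLT.subsingleton M (n + 1) i (by exact_mod_cast hi) N

open IsLocalRing in
theorem exists_projDim_eq (A : Type u) [CommRing A] [IsNoetherianRing A] [IsLocalRing A]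
    (n : ℕ) (h : ∀ i < n, Subsingleton
      (Abelian.Ext.{u} (ModuleCat.of A (ResidueField A)) (ModuleCat.of A A) i)) :
    ∃ M : ModuleCat.{u} A, Nontrivial M ∧ Module.Finite A M ∧ projDim A M = n := by
  obtain ⟨rs, hlen, hmem, hreg⟩ := ModuleCat.exists_isRegular_of_exists_subsingleton_ext
    (maximalIdeal A) n (ModuleCat.of A A)
    (by
      rw [smul_eq_mul, Ideal.mul_top]
      exact lt_top_iff_ne_top.mpr (Ideal.IsPrime.ne_top inferInstance))
    (ModuleCat.of A (ResidueField A))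
    (by
      rw [Module.support_eq_zeroLocus]
      congr 2
      exact Ideal.annihilator_quotient) h
  have hpd := ModuleCat.projectiveDimension_quotient_eq_length.{u} rs hreg
  have hnt : Nontrivial (A ⧸ Ideal.ofList rs) := by
    rw [Ideal.Quotient.nontrivial_iff]
    intro ht
    exact hreg.2 (by rw [ht]; simp)
  have hnt' : Nontrivial (Shrink.{u} (A ⧸ Ideal.ofList rs)) := inferInstance
  have hfin : Module.Finite A (Shrink.{u} (A ⧸ Ideal.ofList rs)) :=
    Module.Finite.equiv (Shrink.linearEquiv A (A ⧸ Ideal.ofList rs)).symm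
  refine ⟨ModuleCat.of A (Shrink.{u} (A ⧸ Ideal.ofList rs)), hnt', hfin, ?_⟩
  refine eq_of_forall_ge_iff fun c => ?_
  induction c with
  | top => simp
  | coe c =>
    rw [projDim_le_iff, ← projectiveDimension_le_iff]
    rw [hpd, hlen]
    norm_cast

open IsLocalRing in
theorem sSup_projDim_eq (A : Type u) [CommRing A] [IsNoetherianRing A] [IsLocalRing A] :
    sSup {d : ℕ∞ | ∃ M : ModuleCat.{u} A, Nontrivial M ∧ Module.Finite A M ∧
        projDim A M ≠ ⊤ ∧ projDim A M = d} = ringDepth A := by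
  have hdlt : ∀ i : ℕ, (i : ℕ∞) < ringDepth A → Subsingleton
      (Abelian.Ext.{u} (ModuleCat.of A (ResidueField A)) (ModuleCat.of A A) i) := by
    intro i hi
    rw [← subsingleton_ext_iff]
    by_contra hc
    refine absurd ?_ (not_le.mpr hi)
    rw [ringDepth]
    exact sInf_le ⟨i, rfl, hc⟩
  apply le_antisymm
  · refine sSup_le ?_
    rintro _ ⟨M, hnt, hfin, htop, rfl⟩
    rw [ringDepth]
    refine le_sInf ?_
    rintro _ ⟨i, rfl, hi⟩
    rw [subsingleton_ext_iff] at hi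
    classical
    have hex : ∃ d, ¬ Subsingleton
      (Abelian.Ext.{u} (ModuleCat.of A (ResidueField A)) (ModuleCat.of A A) d) := ⟨i, hi⟩
    obtain ⟨n, hn⟩ := ENat.ne_top_iff_exists.mp htop
    have hle : HasProjectiveDimensionLE M n := (projDim_le_iff M n).mp hn.symm.le
    have hnlt : ¬ HasProjectiveDimensionLT M n := by
      intro hlt
      rcases n with _ | n
      · have := ModuleCat.isZero_iff_subsingleton.mp (isZero_of_hasProjectiveDimensionLT_zero M)
        exact not_subsingleton M this
      · have := (projDim_le_iff M n).mpr hlt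
        rw [← hn] at this
        norm_cast at this
        omega
    obtain ⟨e, he, -⟩ := auslander_buchsbaum_aux A (Nat.find hex)
      (fun j hj => not_not.mp (Nat.find_min hex hj)) (Nat.find_spec hex) n M hfin hle hnlt
    have := Nat.find_min' hex hi
    rw [← hn]
    norm_cast
    omega
  · refine ENat.forall_natCast_le_iff_le.mp fun n hn => ?_
    obtain ⟨M, h1, h2, h3⟩ := exists_projDim_eq A n fun i hi =>
      hdlt i (lt_of_lt_of_le (by exact_mod_cast hi) hn)
    exact le_sSup ⟨M, h1, h2, by simp [h3], h3⟩

theorem cohenMacaulay_iff_smallFinitisticProjDim_eq_krullDim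
    (A : Type u) [CommRing A] [IsNoetherianRing A] [IsLocalRing A] :
    ((ringDepth A : WithBot ℕ∞) = ringKrullDim A) ↔
      (((sSup {d : ℕ∞ | ∃ M : ModuleCat.{u} A, Nontrivial M ∧ Module.Finite A M ∧
        projDim A M ≠ ⊤ ∧ projDim A M = d} : ℕ∞) : WithBot ℕ∞) = ringKrullDim A) := by
  rw [sSup_projDim_eq]
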